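/- Let q ≥ 1, θ ∈ ℝ, and N ∈ ℂ with N ≠ 0. Let b : ℕ × ℕ → ℂ satisfy b(i,j) = 0 for all (i,j) ≠ (0,0) (i.e., β is constant near G) and b(0,0) = N² (the β-normalization, N = √(β(G))). Then the unique solution λ of the GPW system under the GPW normalization satisfies λ(i,j) = 0 for all (i,j) with i ≥ 2; consequently the corresponding generalized plane wave is exactly the classical plane wave φ(x,y) = exp(N((x−x_G)cos θ + (y−y_G)sin θ)). -/

import Mathlib

noncomputable section

/-- The GPW system: the nonlinear system on the coefficients `lam` arising from matching the
Taylor expansion of `β - P_Δ` at `G` up to order `q`, where `b (i,j) = ∂ₓ^i ∂_y^j β(G)/(i!j!)`. -/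
def gpwSystem (q : ℕ) (b lam : ℕ × ℕ → ℂ) : Prop :=
  ∀ i j : ℕ, i + j + 1 ≤ q →
    b (i, j) =
      (((i + 2) * (i + 1) : ℕ) : ℂ) * lam (i + 2, j)
        + (((j + 2) * (j + 1) : ℕ) : ℂ) * lam (i, j + 2)
        + ∑ k ∈ Finset.range (i + 1), ∑ l ∈ Finset.range (j + 1),
            (((i - k + 1) * (k + 1) : ℕ) : ℂ) * lam (i - k + 1, j - l) * lam (k + 1, l)
        + ∑ k ∈ Finset.range (j + 1), ∑ l ∈ Finset.range (i + 1),
            (((j - k + 1) * (k + 1) : ℕ) : ℂ) * lam (i - l, j - k + 1) * lam (l, k + 1)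

/-- The GPW normalization: `lam (0,0) = 0`, `(lam (1,0), lam (0,1)) = N (cos θ, sin θ)`, and
`lam (i,j) = 0` for `i ∈ {0,1}` and `1 < i + j ≤ q + 1`. -/
def gpwNormalized (q : ℕ) (N : ℂ) (θ : ℝ) (lam : ℕ × ℕ → ℂ) : Prop :=
  lam (0, 0) = 0 ∧ lam (1, 0) = N * Real.cos θ ∧ lam (0, 1) = N * Real.sin θ ∧
    ∀ i j : ℕ, i ≤ 1 → 1 < i + j → i + j ≤ q + 1 → lam (i, j) = 0

/-- The polynomial `P(x,y) = Σ_{0 ≤ i+j ≤ q+1} lam (i,j) (x-x_G)^i (y-y_G)^j`, so that the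
generalized plane wave is `φ = exp P`. -/
def gpwP (q : ℕ) (G : ℝ × ℝ) (lam : ℕ × ℕ → ℂ) (z : ℝ × ℝ) : ℂ :=
  ∑ i ∈ Finset.range (q + 2), ∑ j ∈ Finset.range (q + 2 - i),
    lam (i, j) * ((z.1 - G.1 : ℝ) : ℂ) ^ i * ((z.2 - G.2 : ℝ) : ℂ) ^ j

/-!
With `P_Δ := ΔP + (∂ₓP)² + (∂_yP)²`, the system says that the Taylor coefficients of `P_Δ` at `G`
agree with those of `β` up to degree `q - 1`. Equation `(i, j)` determines `λ(i+2, j)` from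
`λ(i, j+2)` and the coefficients of degree at most `i + j + 1`, so a solution is determined by its
values on the columns `i ≤ 1`. A linear polynomial `P = aX + cY` has `P_Δ = a² + c²`; hence it is
the only solution with its initial columns when `β` is constant equal to `a² + c²`.
-/

section Coefficients

variable {R : Type*} [Semiring R]

/-- The coefficient of `X ^ i * Y ^ j` in `(∂ₓP)²`, where `P` has coefficients `lam`. The
coefficient of `X ^ i * Y ^ j` in `(∂_yP)²` is `derivSqCoeff (lam ∘ Prod.swap) j i`. -/
def derivSqCoeff (lam : ℕ × ℕ → R) (i j : ℕ) : R :=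
  ∑ k ∈ Finset.range (i + 1), ∑ l ∈ Finset.range (j + 1),
    (((i - k + 1) * (k + 1) : ℕ) : R) * lam (i - k + 1, j - l) * lam (k + 1, l)

/-- The coefficient family of the linear polynomial `a * X + c * Y`, the exponent of a plane
wave. -/
def linearCoeff (a c : R) : ℕ × ℕ → R :=
  Pi.single (1, 0) a + Pi.single (0, 1) c

theorem derivSqCoeff_congr {lam mu : ℕ × ℕ → R} {i j : ℕ}
    (h : ∀ r s, r + s ≤ i + j + 1 → lam (r, s) = mu (r, s)) :
    derivSqCoeff lam i j = derivSqCoeff mu i j := by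
  refine Finset.sum_congr rfl fun k hk => Finset.sum_congr rfl fun l hl => ?_
  rw [Finset.mem_range] at hk hl
  rw [h (i - k + 1) (j - l) (by omega), h (k + 1) l (by omega)]

theorem linearCoeff_one_zero (a c : R) : linearCoeff a c (1, 0) = a := by
  simp [linearCoeff]

theorem linearCoeff_of_add_ne_one (a c : R) {i j : ℕ} (h : i + j ≠ 1) :
    linearCoeff a c (i, j) = 0 := by
  have hx : (i, j) ≠ (1, 0) := by rintro ⟨⟩; exact h rfl
  have hy : (i, j) ≠ (0, 1) := by rintro ⟨⟩; exact h rfl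
  simp [linearCoeff, hx, hy]

theorem linearCoeff_comp_swap (a c : R) : linearCoeff a c ∘ Prod.swap = linearCoeff c a := by
  ext ⟨i, j⟩
  simp [linearCoeff, Pi.single_apply, and_comm, add_comm]

theorem derivSqCoeff_linearCoeff_zero_zero (a c : R) :
    derivSqCoeff (linearCoeff a c) 0 0 = a ^ 2 := by
  simp [derivSqCoeff, linearCoeff_one_zero, sq]

theorem derivSqCoeff_linearCoeff_of_ne_zero (a c : R) {i j : ℕ} (h : i + j ≠ 0) :
    derivSqCoeff (linearCoeff a c) i j = 0 := by
  refine Finset.sum_eq_zero fun k hk => Finset.sum_eq_zero fun l hl => ?_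
  rw [Finset.mem_range] at hk hl
  -- The degrees of the two factors add up to `i + j + 2`, so they cannot both be `1`.
  by_cases hkl : k + l = 0
  · rw [linearCoeff_of_add_ne_one a c (by omega : i - k + 1 + (j - l) ≠ 1), mul_zero, zero_mul]
  · rw [linearCoeff_of_add_ne_one a c (by omega : k + 1 + l ≠ 1), mul_zero]

end Coefficients

theorem gpwSystem_iff_derivSqCoeff {q : ℕ} {b lam : ℕ × ℕ → ℂ} :
    gpwSystem q b lam ↔ ∀ i j : ℕ, i + j + 1 ≤ q →
      b (i, j) =
        (((i + 2) * (i + 1) : ℕ) : ℂ) * lam (i + 2, j)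
          + (((j + 2) * (j + 1) : ℕ) : ℂ) * lam (i, j + 2)
          + derivSqCoeff lam i j + derivSqCoeff (lam ∘ Prod.swap) j i :=
  Iff.rfl

theorem gpwSystem_linearCoeff {q : ℕ} {b : ℕ × ℕ → ℂ} {a c : ℂ}
    (hb0 : b (0, 0) = a ^ 2 + c ^ 2)
    (hb : ∀ i j : ℕ, (i, j) ≠ (0, 0) → i + j + 1 ≤ q → b (i, j) = 0) :
    gpwSystem q b (linearCoeff a c) := by
  rw [gpwSystem_iff_derivSqCoeff]
  intro i j hij
  rw [linearCoeff_comp_swap, linearCoeff_of_add_ne_one a c (by omega : i + 2 + j ≠ 1),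
    linearCoeff_of_add_ne_one a c (by omega : i + (j + 2) ≠ 1), mul_zero, mul_zero, zero_add,
    zero_add]
  by_cases h : (i, j) = (0, 0)
  · obtain ⟨rfl, rfl⟩ := Prod.mk.inj h
    rw [hb0, derivSqCoeff_linearCoeff_zero_zero, derivSqCoeff_linearCoeff_zero_zero]
  · have hne : i + j ≠ 0 := by simpa using h
    rw [hb i j h hij, derivSqCoeff_linearCoeff_of_ne_zero a c hne,
      derivSqCoeff_linearCoeff_of_ne_zero c a (by omega), add_zero]

section Uniqueness

variable {q : ℕ} {b lam mu : ℕ × ℕ → ℂ}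

theorem gpwSystem.apply_add_two_eq (hlam : gpwSystem q b lam) (hmu : gpwSystem q b mu) {i j : ℕ}
    (hij : i + j + 1 ≤ q) (hlower : ∀ r s, r + s ≤ i + j + 1 → lam (r, s) = mu (r, s))
    (hdiag : lam (i, j + 2) = mu (i, j + 2)) : lam (i + 2, j) = mu (i + 2, j) := by
  have hx : derivSqCoeff lam i j = derivSqCoeff mu i j := derivSqCoeff_congr hlower
  have hy : derivSqCoeff (lam ∘ Prod.swap) j i = derivSqCoeff (mu ∘ Prod.swap) j i :=
    derivSqCoeff_congr fun r s hrs => hlower s r (by omega)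
  have heq := (gpwSystem_iff_derivSqCoeff.mp hlam i j hij).symm.trans
    (gpwSystem_iff_derivSqCoeff.mp hmu i j hij)
  rw [hx, hy, hdiag] at heq
  have hcoeff : (((i + 2) * (i + 1) : ℕ) : ℂ) ≠ 0 := Nat.cast_ne_zero.mpr (by positivity)
  exact mul_left_cancel₀ hcoeff (by linear_combination heq)

theorem gpwSystem.eq_of_eq_of_le_one (hlam : gpwSystem q b lam) (hmu : gpwSystem q b mu)
    (hcol : ∀ i j, i ≤ 1 → i + j ≤ q + 1 → lam (i, j) = mu (i, j)) :
    ∀ i j, i + j ≤ q + 1 → lam (i, j) = mu (i, j)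
  | 0, j, hij => hcol 0 j zero_le_one hij
  | 1, j, hij => hcol 1 j le_rfl hij
  | i + 2, j, hij =>
    hlam.apply_add_two_eq hmu (by omega)
      (fun r s _ => hlam.eq_of_eq_of_le_one hmu hcol r s (by omega))
      (hlam.eq_of_eq_of_le_one hmu hcol i (j + 2) (by omega))
termination_by i j => (i + j, i)
decreasing_by all_goals simp only [Prod.lex_def]; omega

end Uniqueness

section Exponent

variable (q : ℕ) (G z : ℝ × ℝ)

theorem gpwP_congr {lam mu : ℕ × ℕ → ℂ} (h : ∀ i j, i + j ≤ q + 1 → lam (i, j) = mu (i, j)) :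
    gpwP q G lam z = gpwP q G mu z := by
  refine Finset.sum_congr rfl fun i hi => Finset.sum_congr rfl fun j hj => ?_
  rw [Finset.mem_range] at hi hj
  rw [h i j (by omega)]

theorem gpwP_add (lam mu : ℕ × ℕ → ℂ) :
    gpwP q G (lam + mu) z = gpwP q G lam z + gpwP q G mu z := by
  simp only [gpwP, Pi.add_apply, add_mul, Finset.sum_add_distrib]

theorem gpwP_single {i j : ℕ} (hij : i + j ≤ q + 1) (a : ℂ) :
    gpwP q G (Pi.single (i, j) a) z =
      a * ((z.1 - G.1 : ℝ) : ℂ) ^ i * ((z.2 - G.2 : ℝ) : ℂ) ^ j := by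
  unfold gpwP
  rw [Finset.sum_eq_single_of_mem i (Finset.mem_range.mpr (by omega)),
    Finset.sum_eq_single_of_mem j (Finset.mem_range.mpr (by omega)), Pi.single_eq_same]
  · intro s _ hs
    simp [hs]
  · intro r _ hr
    simp [hr]

theorem gpwP_linearCoeff (a c : ℂ) :
    gpwP q G (linearCoeff a c) z =
      a * ((z.1 - G.1 : ℝ) : ℂ) + c * ((z.2 - G.2 : ℝ) : ℂ) := by
  rw [linearCoeff, gpwP_add, gpwP_single q G z (by omega), gpwP_single q G z (by omega)]
  simp only [pow_zero, pow_one, mul_one]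

end Exponent

/-- The gradient `(a, c)` at `G` may be any vector of `ℂ²`, which includes evanescent waves and, for
`a ^ 2 + c ^ 2 = 0`, harmonic exponentials. -/
theorem gpw_constant_coefficient_is_plane_wave_general (q : ℕ) (a c : ℂ) (G : ℝ × ℝ)
    (b : ℕ × ℕ → ℂ) (hb0 : b (0, 0) = a ^ 2 + c ^ 2)
    (hb : ∀ i j : ℕ, (i, j) ≠ (0, 0) → i + j + 1 ≤ q → b (i, j) = 0)
    (lam : ℕ × ℕ → ℂ) (hsys : gpwSystem q b lam)
    (h00 : lam (0, 0) = 0) (h10 : lam (1, 0) = a) (h01 : lam (0, 1) = c)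
    (hcol : ∀ i j : ℕ, i ≤ 1 → 1 < i + j → i + j ≤ q + 1 → lam (i, j) = 0) :
    (∀ i j : ℕ, 2 ≤ i → i + j ≤ q + 1 → lam (i, j) = 0) ∧
      ∀ z : ℝ × ℝ,
        Complex.exp (gpwP q G lam z) =
          Complex.exp (a * ((z.1 - G.1 : ℝ) : ℂ) + c * ((z.2 - G.2 : ℝ) : ℂ)) := by
  have hinit : ∀ i j, i ≤ 1 → i + j ≤ q + 1 → lam (i, j) = linearCoeff a c (i, j) := by
    intro i j hi hij
    by_cases hdeg : 1 < i + j
    · rw [hcol i j hi hdeg hij, linearCoeff_of_add_ne_one a c hdeg.ne']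
    · obtain ⟨rfl, rfl⟩ | ⟨rfl, rfl⟩ | ⟨rfl, rfl⟩ :
          (i = 0 ∧ j = 0) ∨ (i = 1 ∧ j = 0) ∨ (i = 0 ∧ j = 1) := by omega
      all_goals simp [linearCoeff, h00, h10, h01]
  have hlinear : ∀ i j, i + j ≤ q + 1 → lam (i, j) = linearCoeff a c (i, j) :=
    hsys.eq_of_eq_of_le_one (gpwSystem_linearCoeff hb0 hb) hinit
  refine ⟨fun i j hi hij => ?_, fun z => ?_⟩
  · rw [hlinear i j hij, linearCoeff_of_add_ne_one a c (by omega)]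
  · rw [gpwP_congr q G z hlinear, gpwP_linearCoeff]

/-- With the β-normalization for a constant coefficient (`b (i,j) = 0` for `(i,j) ≠ (0,0)` and
`b (0,0) = N²`), the solution of the GPW system under the GPW normalization satisfies
`lam (i,j) = 0` for all `i ≥ 2`; consequently the generalized plane wave is exactly the
classical plane wave `exp(N((x-x_G)cos θ + (y-y_G)sin θ))`. -/
theorem gpw_constant_coefficient_is_plane_wave (q : ℕ) (hq : 1 ≤ q) (θ : ℝ)
    (N : ℂ) (hN : N ≠ 0) (G : ℝ × ℝ) (b : ℕ × ℕ → ℂ)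
    (hb0 : b (0, 0) = N ^ 2) (hb : ∀ i j : ℕ, (i, j) ≠ ((0 : ℕ), (0 : ℕ)) → b (i, j) = 0)
    (lam : ℕ × ℕ → ℂ) (hsys : gpwSystem q b lam) (hnorm : gpwNormalized q N θ lam) :
    (∀ i j : ℕ, 2 ≤ i → i + j ≤ q + 1 → lam (i, j) = 0) ∧
      ∀ z : ℝ × ℝ,
        Complex.exp (gpwP q G lam z) =
          Complex.exp (N * (((z.1 - G.1 : ℝ) : ℂ) * ((Real.cos θ : ℝ) : ℂ)
            + ((z.2 - G.2 : ℝ) : ℂ) * ((Real.sin θ : ℝ) : ℂ))) := by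
  obtain ⟨h00, h10, h01, hcol⟩ := hnorm
  have hsq : b (0, 0) = (N * Real.cos θ) ^ 2 + (N * Real.sin θ) ^ 2 := by
    have hcs : (Real.cos θ : ℂ) ^ 2 + (Real.sin θ : ℂ) ^ 2 = 1 :=
      mod_cast Real.cos_sq_add_sin_sq θ
    linear_combination hb0 - N ^ 2 * hcs
  convert gpw_constant_coefficient_is_plane_wave_general q _ _ G b hsq (fun i j h _ => hb i j h)
    lam hsys h00 h10 h01 hcol using 4
  ring
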